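/- For every integer m > 1, the random uniform attachment graph process with degree cap d = 2m obeys the first-order convergence law: for every first-order sentence φ in the language of graphs (one binary relation symbol interpreted as adjacency, with equality), the probability ℙ(G_n ⊨ φ) converges as n → ∞. -/

import Mathlib

open Finset MeasureTheory Filter Topology FirstOrder
open scoped ENNReal

noncomputable section

open scoped Classical

/-- The degree of vertex `v` in the graph `g`, counting neighbors among `{1, …, n}`. -/
def degIn (g : SimpleGraph ℕ) (n v : ℕ) : ℕ :=
  ((Finset.Icc 1 n).filter fun u => g.Adj v u).card

/-- The set of neighbors of vertex `v` in the graph `g` among `{1, …, n}`. -/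
def nbrsIn (g : SimpleGraph ℕ) (n v : ℕ) : Finset ℕ :=
  (Finset.Icc 1 n).filter fun u => g.Adj v u

/-- `g'` is obtained from `g` (a graph on `{1,…,n}`) by one admissible uniform-attachment
step with parameter `m` and degree cap `d = 2m`: the new vertex `n+1` is joined to `m`
distinct vertices of `{1,…,n}`, each of degree `< 2m` in `g`; adjacencies among the other
vertices are unchanged, and all edges of `g'` stay inside `{1,…,n+1}`. -/
def IsUAStep (m n : ℕ) (g g' : SimpleGraph ℕ) : Prop :=
  (∀ u v, g'.Adj u v → u ∈ Finset.Icc 1 (n+1) ∧ v ∈ Finset.Icc 1 (n+1)) ∧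
  (∀ u v, u ≠ n+1 → v ≠ n+1 → (g'.Adj u v ↔ g.Adj u v)) ∧
  (nbrsIn g' (n+1) (n+1)).card = m ∧
  (∀ u, g'.Adj (n+1) u → u ∈ Finset.Icc 1 n ∧ degIn g n u < 2*m)

/-- The complete graph on the vertex set `{1, …, k}` (as a graph on `ℕ`). -/
def completeOn (k : ℕ) : SimpleGraph ℕ :=
  SimpleGraph.fromRel (fun u v => u ∈ Finset.Icc 1 k ∧ v ∈ Finset.Icc 1 k)

/-- `N(g)`: the number of `m`-element sets of vertices of degree `< 2m` of a graph `g`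
on `{1,…,n}`. -/
def numOpenSets (m n : ℕ) (g : SimpleGraph ℕ) : ℕ :=
  (((Finset.Icc 1 n).filter fun v => degIn g n v < 2*m).card).choose m

/-- The random uniform attachment graph process with parameter `m` (degree cap `d = 2m`),
modeled by random variables `G n` (for `n ≥ m+1`) on a probability space `(Ω, P)` taking
values in simple graphs on `{1,…,n}`: `G (m+1)` is a.s. the complete graph on `{1,…,m+1}`;
a.s. each `G (n+1)` is obtained from `G n` by an admissible uniform attachment step; and
for every graph `g` on `{1,…,n}` and every `m`-element set `S` of vertices of degree `< 2m`
of `g`, `P(G n = g and the neighborhood of n+1 in G (n+1) equals S) = P(G n = g) / N(g)`. -/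
structure UAProcess (m : ℕ) {Ω : Type} [MeasurableSpace Ω] (P : Measure Ω) where
  G : ℕ → Ω → SimpleGraph ℕ
  meas : ∀ n H, MeasurableSet {ω | G n ω = H}
  init : P {ω | G (m+1) ω = completeOn (m+1)} = 1
  stepAdm : ∀ n, m+1 ≤ n → P {ω | IsUAStep m n (G n ω) (G (n+1) ω)} = 1
  stepUnif : ∀ n, m+1 ≤ n → ∀ g : SimpleGraph ℕ,
    (∀ u v, g.Adj u v → u ∈ Finset.Icc 1 n ∧ v ∈ Finset.Icc 1 n) →
    ∀ S : Finset ℕ, S.card = m →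
    (∀ v ∈ S, v ∈ Finset.Icc 1 n ∧ degIn g n v < 2*m) →
    P {ω | G n ω = g ∧ nbrsIn (G (n+1) ω) (n+1) (n+1) = S} =
      P {ω | G n ω = g} / (numOpenSets m n g : ℝ≥0∞)

/-- The simple graph `g`, restricted to its vertex set `{1,…,n}` and viewed as a
first-order structure in the language of graphs (one binary relation interpreted as
adjacency), satisfies the first-order sentence `φ`. -/
def SatFO (g : SimpleGraph ℕ) (n : ℕ) (φ : Language.graph.Sentence) : Prop :=
  letI := SimpleGraph.structure (g.induce (Set.Icc 1 n))
  (Set.Icc 1 n) ⊨ φ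

/-!
A state of the process is remembered only up to the Ehrenfeucht–Fraïssé type of its graph, of a rank
exceeding the quantifier rank of `φ`, with each vertex labelled by its deficit (the number of edges
it can still receive) and its slot (the number of younger open vertices). The total deficit is
always `m * (m + 1)`, so there are only finitely many labels, hence finitely many types; and the
effect of an attachment step on the type depends only on the type and on the slots that receive the
new edges. The process therefore lumps to a finite Markov chain.

Joining each new vertex to the `m` youngest ones is always possible. Repeating this step grows the
`m`-th power of a path, whose length a type of bounded rank eventually cannot see, so the type
becomes stationary. Hence every state of the finite chain leads to one at which the chain can stay
put; this rules out periodicity, and the expectation of every function of the state converges.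
-/

/-! ### Markov operators with a recurring move -/

/-- An asymptotic-regularity criterion: the displacement `dist (f^[n] y) (f^[n+1] y)` decreases
along an orbit, so at a cluster point of the orbit it is constant. -/
theorem exists_tendsto_iterate_of_lipschitzWith_one {E : Type*} [MetricSpace E] [ProperSpace E]
    {f : E → E} (hf : LipschitzWith 1 f) {x : E}
    (hbdd : Bornology.IsBounded (Set.range fun n => f^[n] x))
    (hfix : ∀ y, (∀ n, dist (f^[n] y) (f^[n + 1] y) = dist y (f y)) → f y = y) :
    ∃ L, Tendsto (fun n => f^[n] x) atTop (𝓝 L) := by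
  have hdist (y z : E) : dist (f y) (f z) ≤ dist y z := by simpa using hf.dist_le_mul y z
  have hanti : Antitone fun n => dist (f^[n] x) (f^[n + 1] x) := by
    refine antitone_nat_of_succ_le fun n => ?_
    simpa only [Function.iterate_succ_apply'] using hdist (f^[n] x) (f (f^[n] x))
  have hdisp : Tendsto (fun n => dist (f^[n] x) (f^[n + 1] x)) atTop
      (𝓝 (⨅ n, dist (f^[n] x) (f^[n + 1] x))) :=
    tendsto_atTop_ciInf hanti ⟨0, Set.forall_mem_range.2 fun _ => dist_nonneg⟩
  obtain ⟨L, -, ψ, hψ, hL⟩ := tendsto_subseq_of_bounded hbdd fun n => Set.mem_range_self n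
  have hdispL (n : ℕ) :
      dist (f^[n] L) (f^[n + 1] L) = ⨅ n, dist (f^[n] x) (f^[n + 1] x) := by
    refine tendsto_nhds_unique ?_
      (hdisp.comp (tendsto_atTop_mono (fun i => Nat.le_add_left (ψ i) n) hψ.tendsto_atTop))
    have hcont := ((hf.continuous.iterate n).dist (hf.continuous.iterate (n + 1))).tendsto L
    refine (hcont.comp hL).congr fun i => ?_
    simp only [Function.comp_apply, ← Function.iterate_add_apply, Nat.add_right_comm n 1]
  have hfL : f L = L := hfix L fun n => (hdispL n).trans (hdispL 0).symm
  have hanti' : Antitone fun n => dist (f^[n] x) L := by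
    refine antitone_nat_of_succ_le fun n => ?_
    simpa only [Function.iterate_succ_apply', hfL] using hdist (f^[n] x) L
  have hlim := tendsto_atTop_ciInf hanti' ⟨0, Set.forall_mem_range.2 fun _ => dist_nonneg⟩
  refine ⟨L, tendsto_iff_dist_tendsto_zero.2 ?_⟩
  rwa [← tendsto_nhds_unique (tendsto_iff_dist_tendsto_zero.1 hL)
    (hlim.comp hψ.tendsto_atTop)] at hlim

/-- A Markov operator `A` on real functions that gives positive weight to the move `z ↦ s z`,
encoded as two forms of the maximum principle: `A f` does not exceed an upper bound of `f`,
and if it attains such a bound at `z` then `f` attains it at `s z`. -/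
structure IsMarkovCharging {Z : Type*} (A : Module.End ℝ (Z → ℝ)) (s : Z → Z) : Prop where
  apply_le : ∀ {f : Z → ℝ} {B : ℝ}, (∀ y, f y ≤ B) → ∀ z, A f z ≤ B
  eq_of_apply_eq : ∀ {f : Z → ℝ} {B : ℝ}, (∀ y, f y ≤ B) → ∀ {z}, A f z = B → f (s z) = B

namespace IsMarkovCharging

variable {Z : Type*} {A : Module.End ℝ (Z → ℝ)} {s : Z → Z}

theorem pow_apply_le (hA : IsMarkovCharging A s) {f : Z → ℝ} {B : ℝ} (hf : ∀ y, f y ≤ B) (n : ℕ) :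
    ∀ z, (A ^ n) f z ≤ B := by
  induction n with
  | zero => exact hf
  | succ n ih => simpa only [pow_succ', Module.End.mul_apply] using hA.apply_le ih

theorem eq_of_pow_apply_eq (hA : IsMarkovCharging A s) {f : Z → ℝ} {B : ℝ} (hf : ∀ y, f y ≤ B)
    {n : ℕ} {z : Z} (h : (A ^ n) f z = B) : f (s^[n] z) = B := by
  induction n generalizing z with
  | zero => exact h
  | succ n ih =>
    rw [pow_succ', Module.End.mul_apply] at h
    exact ih (hA.eq_of_apply_eq (hA.pow_apply_le hf n) h)

theorem norm_apply_le [Fintype Z] (hA : IsMarkovCharging A s) (f : Z → ℝ) : ‖A f‖ ≤ ‖f‖ := by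
  refine (pi_norm_le_iff_of_nonneg (norm_nonneg f)).2 fun z => abs_le'.2 ⟨?_, ?_⟩
  · exact hA.apply_le (fun y => (le_abs_self _).trans (norm_le_pi_norm f y)) z
  · rw [← Pi.neg_apply, ← map_neg]
    exact hA.apply_le (fun y => (neg_le_abs _).trans (norm_le_pi_norm f y)) z

theorem norm_pow_apply_le [Fintype Z] (hA : IsMarkovCharging A s) (n : ℕ) (f : Z → ℝ) :
    ‖(A ^ n) f‖ ≤ ‖f‖ := by
  induction n with
  | zero => simp
  | succ n ih =>
    rw [pow_succ', Module.End.mul_apply]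
    exact (hA.norm_apply_le _).trans ih

/-- If the drift `f - A f` still reaches its upper bound `B` after a long time, then it equals `B`
at many consecutive times at one place, and there `A ^ T` lowers `f` by `T * B`. -/
theorem mul_le_of_pow_apply_sub_eq [Fintype Z] (hA : IsMarkovCharging A s) {f : Z → ℝ} {B : ℝ}
    (hB : ∀ y, (f - A f) y ≤ B) {J T : ℕ} {z : Z} (hz : s (s^[J] z) = s^[J] z)
    (h : (A ^ (J + T)) (f - A f) z = B) : T * B ≤ 2 * ‖f‖ := by
  set w := s^[J] z with hw
  have hstay (i : ℕ) (hi : i < T) : (A ^ i) (f - A f) w = B := by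
    have hmul : (A ^ (J + T)) (f - A f) = (A ^ (J + T - i)) ((A ^ i) (f - A f)) := by
      rw [← Module.End.mul_apply, ← pow_add, Nat.sub_add_cancel (by omega)]
    rw [hmul] at h
    have hend := hA.eq_of_pow_apply_eq (hA.pow_apply_le hB i) h
    rwa [show J + T - i = (T - i) + J by omega, Function.iterate_add_apply, ← hw,
      Function.iterate_fixed hz] at hend
  have hsum : T * B = f w - (A ^ T) f w := by
    calc (T * B : ℝ) = ∑ i ∈ range T, (A ^ i) (f - A f) w := by
          rw [sum_congr rfl fun i hi => hstay i (mem_range.1 hi)]; simp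
      _ = ∑ i ∈ range T, ((A ^ i) f w - (A ^ (i + 1)) f w) := by
          simp only [map_sub, Pi.sub_apply, pow_succ, Module.End.mul_apply]
      _ = f w - (A ^ T) f w := by rw [sum_range_sub']; simp
  have hfw : f w ≤ ‖f‖ := (le_abs_self _).trans (norm_le_pi_norm f w)
  have hAfw : -(A ^ T) f w ≤ ‖f‖ :=
    (neg_le_abs _).trans ((norm_le_pi_norm _ w).trans (hA.norm_pow_apply_le T f))
  linarith

theorem apply_eq_of_norm_pow_sub_eq [Fintype Z] (hA : IsMarkovCharging A s)
    (hs : ∀ z, ∃ J, s (s^[J] z) = s^[J] z) {f : Z → ℝ}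
    (hf : ∀ n, ‖(A ^ n) (f - A f)‖ = ‖f - A f‖) : A f = f := by
  by_contra hne
  have hpos : 0 < ‖f - A f‖ := norm_pos_iff.2 (sub_ne_zero.2 (Ne.symm hne))
  obtain ⟨J, hJ⟩ : ∃ J, ∀ z, s (s^[J] z) = s^[J] z := by
    choose J hJ using hs
    refine ⟨univ.sup J, fun z => ?_⟩
    rw [← Nat.sub_add_cancel (le_sup (f := J) (mem_univ z)), Function.iterate_add_apply,
      Function.iterate_fixed (hJ z), hJ z]
  obtain ⟨T, hT⟩ := exists_nat_gt (2 * ‖f‖ / ‖f - A f‖)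
  rw [div_lt_iff₀ hpos] at hT
  obtain ⟨z, hz⟩ : ∃ z, ‖f - A f‖ ≤ |(A ^ (J + T)) (f - A f) z| := by
    by_contra! hlt
    exact ((pi_norm_lt_iff hpos).2 hlt).ne (hf _)
  have habs := hz.antisymm' ((norm_le_pi_norm _ z).trans_eq (hf (J + T)))
  refine hT.not_ge ?_
  rcases (abs_eq hpos.le).1 habs with h | h
  · exact hA.mul_le_of_pow_apply_sub_eq
      (fun y => (le_abs_self _).trans (norm_le_pi_norm (f - A f) y)) (hJ z) h
  · have hneg : -f - A (-f) = -(f - A f) := by rw [map_neg]; abel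
    rw [← norm_neg f]
    refine hA.mul_le_of_pow_apply_sub_eq (fun y => ?_) (hJ z) ?_
    · rw [hneg]
      exact (neg_le_abs _).trans (norm_le_pi_norm (f - A f) y)
    · rw [hneg, map_neg, Pi.neg_apply, h, neg_neg]

theorem exists_tendsto_pow_apply_of_finite [Finite Z] (hA : IsMarkovCharging A s)
    (hs : ∀ z, ∃ J, s (s^[J] z) = s^[J] z) (f : Z → ℝ) :
    ∃ L, Tendsto (fun n => (A ^ n) f) atTop (𝓝 L) := by
  have := Fintype.ofFinite Z
  have hpow (n : ℕ) (g : Z → ℝ) : A^[n] g = (A ^ n) g := (Module.End.pow_apply A n g).symm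
  have hlip : LipschitzWith 1 A := LipschitzWith.of_dist_le_mul fun g h => by
    simpa only [dist_eq_norm, map_sub, NNReal.coe_one, one_mul] using hA.norm_apply_le (g - h)
  have hbdd : Bornology.IsBounded (Set.range fun n => A^[n] f) :=
    isBounded_iff_forall_norm_le.2 ⟨‖f‖, Set.forall_mem_range.2 fun n =>
      (congrArg norm (hpow n f)).trans_le (hA.norm_pow_apply_le n f)⟩
  simp only [← hpow]
  refine exists_tendsto_iterate_of_lipschitzWith_one hlip hbdd fun g hg =>
    hA.apply_eq_of_norm_pow_sub_eq hs fun n => ?_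
  rw [← dist_eq_norm, ← hg n, dist_eq_norm, hpow, hpow, pow_succ, Module.End.mul_apply, map_sub]

theorem exists_tendsto_pow_apply {σ : Type*} {c : Z → σ} (hc : (Set.range c).Finite)
    (hA : IsMarkovCharging A s)
    (hAc : ∀ g : Z → ℝ, g.FactorsThrough c → (A g).FactorsThrough c)
    (hsc : (c ∘ s).FactorsThrough c) (hs : ∀ z, ∃ J, c (s^[J + 1] z) = c (s^[J] z))
    {f : Z → ℝ} (hf : f.FactorsThrough c) (z : Z) :
    ∃ L, Tendsto (fun n => (A ^ n) f z) atTop (𝓝 L) := by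
  have := hc.to_subtype
  set p : Z → Set.range c := Set.rangeFactorization c
  set r : Set.range c → Z := Set.rangeSplitting c
  have hrp (z : Z) : c (r (p z)) = c z := Set.apply_rangeSplitting c (p z)
  have hpr (q : Set.range c) : p (r q) = q := Set.leftInverse_rangeSplitting c q
  have hp {y z : Z} (h : c y = c z) : p y = p z := Subtype.ext h
  let B : Module.End ℝ (Set.range c → ℝ) := LinearMap.funLeft ℝ ℝ r ∘ₗ A ∘ₗ LinearMap.funLeft ℝ ℝ p
  have hB : IsMarkovCharging B (p ∘ s ∘ r) :=
    { apply_le := fun hg q => hA.apply_le (fun y => hg (p y)) (r q)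
      eq_of_apply_eq := fun hg _ h => hA.eq_of_apply_eq (fun y => hg (p y)) h }
  have hlump : A ∘ₗ LinearMap.funLeft ℝ ℝ p = LinearMap.funLeft ℝ ℝ p ∘ₗ B :=
    LinearMap.ext fun g => funext fun y =>
      hAc (g ∘ p) (fun _ _ h => congrArg g (hp h)) (hrp y).symm
  have hsemi : Function.Semiconj p s (p ∘ s ∘ r) := fun y => hp (hsc (hrp y).symm)
  have hstat (q : Set.range c) : ∃ J, (p ∘ s ∘ r) ((p ∘ s ∘ r)^[J] q) = (p ∘ s ∘ r)^[J] q := by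
    obtain ⟨J, hJ⟩ := hs (r q)
    refine ⟨J, ?_⟩
    rw [← Function.iterate_succ_apply' (p ∘ s ∘ r), ← hpr q, ← (hsemi.iterate_right J).eq,
      ← (hsemi.iterate_right (J + 1)).eq, hp hJ]
  obtain ⟨L, hL⟩ := hB.exists_tendsto_pow_apply_of_finite hstat (f ∘ r)
  refine ⟨L (p z), (tendsto_pi_nhds.1 hL (p z)).congr fun n => ?_⟩
  have hfp : LinearMap.funLeft ℝ ℝ p (f ∘ r) = f := funext fun y => hf (hrp y)
  have hpow := LinearMap.congr_fun (Module.End.commute_pow_left_of_commute hlump n) (f ∘ r)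
  rw [LinearMap.comp_apply, hfp] at hpow
  exact (congrFun hpow z).symm

end IsMarkovCharging

/-! ### Ehrenfeucht–Fraïssé types -/

section OptionElim

variable {ι κ U : Type*}

theorem optionElim_comp (u : U) (t : ι → U) (f : κ → ι) :
    Option.elim' u (t ∘ f) = Option.elim' u t ∘ Option.map f := by
  funext i; cases i <;> rfl

theorem comp_optionElim {U' : Type*} (g : U → U') (u : U) (t : ι → U) :
    g ∘ Option.elim' u t = Option.elim' (g u) (g ∘ t) := by
  funext i; cases i <;> rfl

theorem optionElim_optionElim_swap (u₀ u : U) (t : ι → U) :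
    Option.elim' u (Option.elim' u₀ t) =
      Option.elim' u₀ (Option.elim' u t) ∘ Option.elim' (some none) (Option.map some) := by
  funext i; rcases i with _ | _ | i <;> rfl

theorem optionElim_optionElim_self (u : U) (t : ι → U) :
    Option.elim' u (Option.elim' u t) = Option.elim' u t ∘ Option.elim' none id := by
  funext i; rcases i with _ | _ | i <;> rfl

end OptionElim

/-- A graph on the vertex set `verts`, with a label on each vertex. The graph and the labelling are
total on `V`; only their values on `verts` matter. -/
structure LabelledGraph (V Λ : Type*) where
  verts : Set V
  graph : SimpleGraph V
  label : V → Λ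

/-- Ehrenfeucht–Fraïssé types of rank `k` of tuples indexed by `ι`: a type of rank `0` records
which entries are equal, which are adjacent, and their labels; a type of rank `k + 1` is the set
of rank `k` types of the one-vertex extensions of the tuple. -/
def RankType (Λ : Type*) : ℕ → Type* → Type _
  | 0, ι => (ι → ι → Prop) × (ι → ι → Prop) × (ι → Λ)
  | k + 1, ι => Set (RankType Λ k (Option ι))

namespace LabelledGraph

variable {V W Λ ι κ : Type*} {M M' : LabelledGraph V Λ} {N N' : LabelledGraph W Λ} {k : ℕ}
  {a : ι → V} {b : ι → W}

/-- The Ehrenfeucht–Fraïssé type of rank `k` of the tuple `a`. -/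
def rankType (M : LabelledGraph V Λ) : ∀ (k : ℕ) {ι : Type*}, (ι → V) → RankType Λ k ι
  | 0, _, a => (fun i j => a i = a j, fun i j => M.graph.Adj (a i) (a j), M.label ∘ a)
  | k + 1, _, a => (fun v => M.rankType k (Option.elim' v a)) '' M.verts

theorem rankType_zero_eq_iff : M.rankType 0 a = N.rankType 0 b ↔
    (∀ i j, a i = a j ↔ b i = b j) ∧ (∀ i j, M.graph.Adj (a i) (a j) ↔ N.graph.Adj (b i) (b j)) ∧
      ∀ i, M.label (a i) = N.label (b i) := by
  change ((_, _, _) : (ι → ι → Prop) × (ι → ι → Prop) × (ι → Λ)) = (_, _, _) ↔ _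
  simp only [Prod.mk.injEq, funext_iff, eq_iff_iff, Function.comp_apply]

theorem rankType_succ_eq_iff : M.rankType (k + 1) a = N.rankType (k + 1) b ↔
    (∀ v ∈ M.verts, ∃ w ∈ N.verts,
      M.rankType k (Option.elim' v a) = N.rankType k (Option.elim' w b)) ∧
    ∀ w ∈ N.verts, ∃ v ∈ M.verts,
      M.rankType k (Option.elim' v a) = N.rankType k (Option.elim' w b) := by
  change (_ '' _ : Set (RankType Λ k (Option ι))) = _ '' _ ↔ _
  rw [Set.Subset.antisymm_iff, Set.image_subset_iff, Set.image_subset_iff]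
  simp only [Set.subset_def, Set.mem_preimage, Set.mem_image, eq_comm]

theorem rankType_comp (f : κ → ι) (h : M.rankType k a = N.rankType k b) :
    M.rankType k (a ∘ f) = N.rankType k (b ∘ f) := by
  induction k generalizing ι κ with
  | zero =>
    obtain ⟨heq, hadj, hlab⟩ := rankType_zero_eq_iff.1 h
    exact rankType_zero_eq_iff.2
      ⟨fun i j => heq (f i) (f j), fun i j => hadj (f i) (f j), fun i => hlab (f i)⟩
  | succ k ih =>
    obtain ⟨hforth, hback⟩ := rankType_succ_eq_iff.1 h
    refine rankType_succ_eq_iff.2 ⟨fun v hv => ?_, fun w hw => ?_⟩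
    · obtain ⟨w, hw, hvw⟩ := hforth v hv
      exact ⟨w, hw, by simpa only [optionElim_comp] using ih (Option.map f) hvw⟩
    · obtain ⟨v, hv, hvw⟩ := hback w hw
      exact ⟨v, hv, by simpa only [optionElim_comp] using ih (Option.map f) hvw⟩

theorem rankType_eq_of_succ (hM : M.verts.Nonempty)
    (h : M.rankType (k + 1) a = N.rankType (k + 1) b) : M.rankType k a = N.rankType k b := by
  obtain ⟨v, hv⟩ := hM
  obtain ⟨w, -, hvw⟩ := (rankType_succ_eq_iff.1 h).1 v hv
  exact rankType_comp some hvw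

theorem rankType_zero_eq (hM : M.verts.Nonempty) (h : M.rankType k a = N.rankType k b) :
    M.rankType 0 a = N.rankType 0 b := by
  induction k with
  | zero => exact h
  | succ k ih => exact ih (rankType_eq_of_succ hM h)

theorem label_eq_of_rankType_eq (hM : M.verts.Nonempty) (h : M.rankType k a = N.rankType k b)
    (i : ι) : M.label (a i) = N.label (b i) :=
  (rankType_zero_eq_iff.1 (rankType_zero_eq hM h)).2.2 i

theorem image_label_eq_of_rankType_succ_eq (h : M.rankType (k + 1) a = N.rankType (k + 1) b) :
    M.label '' M.verts = N.label '' N.verts := by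
  obtain ⟨hforth, hback⟩ := rankType_succ_eq_iff.1 h
  ext l
  constructor
  · rintro ⟨v, hv, rfl⟩
    obtain ⟨w, hw, hvw⟩ := hforth v hv
    exact ⟨w, hw, (label_eq_of_rankType_eq ⟨v, hv⟩ hvw none).symm⟩
  · rintro ⟨w, hw, rfl⟩
    obtain ⟨v, hv, hvw⟩ := hback w hw
    exact ⟨v, hv, label_eq_of_rankType_eq ⟨v, hv⟩ hvw none⟩

theorem finite_setOf_rankType [Finite ι] (V : Type*) {S : Set Λ} (hS : S.Finite) (k : ℕ) :
    {t | ∃ (M : LabelledGraph V Λ) (a : ι → V),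
      (∀ v ∈ M.verts, M.label v ∈ S) ∧ (∀ i, M.label (a i) ∈ S) ∧ M.rankType k a = t}.Finite := by
  induction k generalizing ι with
  | zero =>
    refine (Set.finite_univ.prod (Set.finite_univ.prod
      (Set.Finite.pi' fun _ : ι => hS))).subset ?_
    rintro _ ⟨M, a, -, ha, rfl⟩
    exact ⟨trivial, trivial, ha⟩
  | succ k ih =>
    refine (ih (ι := Option ι)).finite_subsets.subset ?_
    rintro _ ⟨M, a, hM, ha, rfl⟩ _ ⟨v, hv, rfl⟩
    exact ⟨M, Option.elim' v a, hM, fun i => i.rec (hM v hv) ha, rfl⟩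

/-- `M'` arises from `M` by adding the vertex `v₀` with label `l₀`, joining it to the vertices whose
label is in `s`, and then relabelling the vertices of `M` by `h`. -/
structure IsLabelledExtension (M M' : LabelledGraph V Λ) (v₀ : V) (s : Set Λ) (h : Λ → Λ) (l₀ : Λ) :
    Prop where
  notMem : v₀ ∉ M.verts
  verts_eq : M'.verts = insert v₀ M.verts
  adj_old : ∀ u ∈ M.verts, ∀ v ∈ M.verts, (M'.graph.Adj u v ↔ M.graph.Adj u v)
  adj_new : ∀ v ∈ M.verts, (M'.graph.Adj v₀ v ↔ M.label v ∈ s)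
  label_old : ∀ v ∈ M.verts, M'.label v = h (M.label v)
  label_new : M'.label v₀ = l₀

namespace IsLabelledExtension

variable {v₀ : V} {w₀ : W} {s : Set Λ} {h : Λ → Λ} {l₀ : Λ}

theorem rankType_zero_eq (hM : IsLabelledExtension M M' v₀ s h l₀)
    (hN : IsLabelledExtension N N' w₀ s h l₀) (ha : ∀ i, a i ∈ M.verts) (hb : ∀ i, b i ∈ N.verts)
    (hab : M.rankType 0 a = N.rankType 0 b) :
    M'.rankType 0 (Option.elim' v₀ a) = N'.rankType 0 (Option.elim' w₀ b) := by
  obtain ⟨heq, hadj, hlab⟩ := rankType_zero_eq_iff.1 hab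
  have hane (i : ι) : a i ≠ v₀ := fun h => hM.notMem (h ▸ ha i)
  have hbne (i : ι) : b i ≠ w₀ := fun h => hN.notMem (h ▸ hb i)
  refine rankType_zero_eq_iff.2 ⟨?_, ?_, ?_⟩
  · rintro (_ | i) (_ | j) <;> simp [hane, hbne, (hane _).symm, (hbne _).symm, heq]
  · rintro (_ | i) (_ | j)
    · simp
    · simp [hM.adj_new _ (ha j), hN.adj_new _ (hb j), hlab]
    · simp [SimpleGraph.adj_comm _ (a i), SimpleGraph.adj_comm _ (b i), hM.adj_new _ (ha i),
        hN.adj_new _ (hb i), hlab]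
    · simp [hM.adj_old _ (ha i) _ (ha j), hN.adj_old _ (hb i) _ (hb j), hadj]
  · rintro (_ | i)
    · simp [hM.label_new, hN.label_new]
    · simp [hM.label_old _ (ha i), hN.label_old _ (hb i), hlab]

theorem rankType_elim_eq (hM : IsLabelledExtension M M' v₀ s h l₀)
    (hN : IsLabelledExtension N N' w₀ s h l₀) (hne : M.verts.Nonempty)
    (ha : ∀ i, a i ∈ M.verts) (hb : ∀ i, b i ∈ N.verts) (hab : M.rankType k a = N.rankType k b) :
    M'.rankType k (Option.elim' v₀ a) = N'.rankType k (Option.elim' w₀ b) := by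
  induction k generalizing ι with
  | zero => exact hM.rankType_zero_eq hN ha hb hab
  | succ k ih =>
    have hnew := rankType_comp (Option.elim' none id)
      (ih ha hb (rankType_eq_of_succ hne hab))
    have hold {v : V} {w : W} (hv : v ∈ M.verts) (hw : w ∈ N.verts)
        (hvw : M.rankType k (Option.elim' v a) = N.rankType k (Option.elim' w b)) :
        M'.rankType k (Option.elim' v (Option.elim' v₀ a)) =
          N'.rankType k (Option.elim' w (Option.elim' w₀ b)) := by
      rw [optionElim_optionElim_swap v₀ v, optionElim_optionElim_swap w₀ w]
      exact rankType_comp _ (ih (fun i => i.rec hv ha) (fun i => i.rec hw hb) hvw)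
    rw [← optionElim_optionElim_self, ← optionElim_optionElim_self] at hnew
    obtain ⟨hforth, hback⟩ := rankType_succ_eq_iff.1 hab
    refine rankType_succ_eq_iff.2 ⟨?_, ?_⟩ <;>
      simp only [hM.verts_eq, hN.verts_eq, Set.forall_mem_insert, Set.exists_mem_insert]
    · refine ⟨Or.inl hnew, fun v hv => Or.inr ?_⟩
      obtain ⟨w, hw, hvw⟩ := hforth v hv
      exact ⟨w, hw, hold hv hw hvw⟩
    · refine ⟨Or.inl hnew, fun w hw => Or.inr ?_⟩
      obtain ⟨v, hv, hvw⟩ := hback w hw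
      exact ⟨v, hv, hold hv hw hvw⟩

theorem rankType_eq (hM : IsLabelledExtension M M' v₀ s h l₀)
    (hN : IsLabelledExtension N N' w₀ s h l₀) (hne : M.verts.Nonempty)
    (ha : ∀ i, a i ∈ M.verts) (hb : ∀ i, b i ∈ N.verts) (hab : M.rankType k a = N.rankType k b) :
    M'.rankType k a = N'.rankType k b :=
  rankType_comp some (hM.rankType_elim_eq hN hne ha hb hab)

end IsLabelledExtension

instance (M : LabelledGraph V Λ) : Language.graph.Structure M.verts :=
  SimpleGraph.structure (M.graph.induce M.verts)

end LabelledGraph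

/-- The maximal number of nested quantifiers in a formula of the language of graphs. -/
def quantifierRank {α : Type*} : ∀ {n : ℕ}, Language.graph.BoundedFormula α n → ℕ
  | _, .falsum => 0
  | _, .equal _ _ => 0
  | _, .rel _ _ => 0
  | _, .imp φ ψ => max (quantifierRank φ) (quantifierRank ψ)
  | _, .all φ => quantifierRank φ + 1

theorem exists_eq_var {α : Type*} (t : Language.graph.Term α) : ∃ i, t = Language.var i := by
  cases t with
  | var i => exact ⟨i, rfl⟩
  | func f _ => exact isEmptyElim f

theorem val_comp_sumElim_snoc {α V : Type*} {S : Set V} {n : ℕ} (v : α → S) (xs : Fin n → S)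
    (x : S) : Subtype.val ∘ Sum.elim v (Fin.snoc xs x : Fin (n + 1) → S) =
      Option.elim' (x : V) (Subtype.val ∘ Sum.elim v xs) ∘
        Sum.elim (some ∘ Sum.inl) (Fin.lastCases none (some ∘ Sum.inr)) := by
  funext i
  rcases i with i | i
  · rfl
  · induction i using Fin.lastCases <;> simp

namespace LabelledGraph

variable {V W Λ α : Type*} {M : LabelledGraph V Λ} {N : LabelledGraph W Λ} {k n : ℕ}

theorem realize_iff_of_rankType_eq (hM : M.verts.Nonempty)
    (φ : Language.graph.BoundedFormula α n) (hk : quantifierRank φ ≤ k)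
    {v : α → M.verts} {w : α → N.verts} {xs : Fin n → M.verts} {ys : Fin n → N.verts}
    (h : M.rankType k (Subtype.val ∘ Sum.elim v xs) = N.rankType k (Subtype.val ∘ Sum.elim w ys)) :
    φ.Realize v xs ↔ φ.Realize w ys := by
  induction φ generalizing k with
  | falsum => rfl
  | @equal n t₁ t₂ =>
    obtain ⟨i, rfl⟩ := exists_eq_var t₁
    obtain ⟨j, rfl⟩ := exists_eq_var t₂
    change Sum.elim v xs i = Sum.elim v xs j ↔ Sum.elim w ys i = Sum.elim w ys j
    rw [← Subtype.coe_inj, ← Subtype.coe_inj]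
    exact (rankType_zero_eq_iff.1 (rankType_zero_eq hM h)).1 i j
  | @rel n _ R ts =>
    cases R
    obtain ⟨i, hi⟩ := exists_eq_var (ts 0)
    obtain ⟨j, hj⟩ := exists_eq_var (ts 1)
    change M.graph.Adj ((ts 0).realize (Sum.elim v xs) : M.verts)
        ((ts 1).realize (Sum.elim v xs) : M.verts) ↔
      N.graph.Adj ((ts 0).realize (Sum.elim w ys) : N.verts)
        ((ts 1).realize (Sum.elim w ys) : N.verts)
    rw [hi, hj]
    exact (rankType_zero_eq_iff.1 (rankType_zero_eq hM h)).2.1 i j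
  | imp φ ψ ihφ ihψ =>
    exact imp_congr (ihφ ((le_max_left _ _).trans hk) h) (ihψ ((le_max_right _ _).trans hk) h)
  | @all n φ ih =>
    obtain ⟨k, rfl⟩ := Nat.exists_eq_add_of_le' (Nat.one_le_of_lt hk)
    have hstep {x : M.verts} {y : N.verts} (hxy : M.rankType k
        (Option.elim' (x : V) (Subtype.val ∘ Sum.elim v xs)) =
          N.rankType k (Option.elim' (y : W) (Subtype.val ∘ Sum.elim w ys))) :
        φ.Realize v (Fin.snoc xs x) ↔ φ.Realize w (Fin.snoc ys y) := by
      refine ih (Nat.le_of_succ_le_succ hk) ?_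
      rw [val_comp_sumElim_snoc, val_comp_sumElim_snoc]
      exact rankType_comp _ hxy
    obtain ⟨hforth, hback⟩ := rankType_succ_eq_iff.1 h
    refine ⟨fun hall y => ?_, fun hall x => ?_⟩
    · obtain ⟨x, hx, hxy⟩ := hback y y.2
      exact (hstep (x := ⟨x, hx⟩) hxy).1 (hall _)
    · obtain ⟨y, hy, hxy⟩ := hforth x x.2
      exact (hstep (y := ⟨y, hy⟩) hxy).2 (hall _)

end LabelledGraph

theorem satFO_iff_of_rankType_eq {Λ : Type*} {g g' : SimpleGraph ℕ} {n n' : ℕ} {l l' : ℕ → Λ}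
    (hn : 1 ≤ n) (φ : Language.graph.Sentence) {a b : Empty → ℕ}
    (h : LabelledGraph.rankType ⟨Set.Icc 1 n, g, l⟩ (quantifierRank φ) a =
      LabelledGraph.rankType ⟨Set.Icc 1 n', g', l'⟩ (quantifierRank φ) b) :
    SatFO g n φ ↔ SatFO g' n' φ := by
  have h' := LabelledGraph.rankType_comp (Sum.elim id Fin.elim0 : Empty ⊕ Fin 0 → Empty) h
  refine LabelledGraph.realize_iff_of_rankType_eq (M := ⟨Set.Icc 1 n, g, l⟩)
    (N := ⟨Set.Icc 1 n', g', l'⟩) ⟨1, Set.left_mem_Icc.2 hn⟩ φ le_rfl ?_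
  convert h' <;> exact Subsingleton.elim _ _

/-! ### Inserting a vertex -/

/-- The increasing injection of `ℕ` that leaves out `p + 1`. -/
def shift (p v : ℕ) : ℕ := if v ≤ p then v else v + 1

theorem shift_of_le {p v : ℕ} (h : v ≤ p) : shift p v = v := if_pos h

theorem shift_of_lt {p v : ℕ} (h : p < v) : shift p v = v + 1 := if_neg h.not_ge

theorem shift_injective (p : ℕ) : Function.Injective (shift p) := by
  intro u v h
  unfold shift at h
  split_ifs at h <;> omega

theorem shift_eq_shift {p q v : ℕ} (h : v ≤ p ∧ v ≤ q ∨ p < v ∧ q < v) :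
    shift p v = shift q v := by
  unfold shift
  split_ifs <;> omega

namespace LabelledGraph

variable {Λ : Type*} {M M' : LabelledGraph ℕ Λ} {p R lo hi : ℕ}

/-- `M'` looks like `M` with a vertex inserted after `p`, except possibly at vertices of the
window `(p, p + R)`, whose adjacencies and labels are not compared. -/
structure IsInsertion (M M' : LabelledGraph ℕ Λ) (p R : ℕ) : Prop where
  mem_iff : ∀ v, shift p v ∈ M'.verts ↔ v ∈ M.verts
  adj_iff : ∀ u ∈ M.verts, ∀ v ∈ M.verts, (u ≤ p ∨ p + R ≤ u) → (v ≤ p ∨ p + R ≤ v) →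
    (M'.graph.Adj (shift p u) (shift p v) ↔ M.graph.Adj u v)
  label_eq : ∀ v ∈ M.verts, (v ≤ p ∨ p + R ≤ v) → M'.label (shift p v) = M.label v

theorem IsInsertion.mem_verts_of_le (h : IsInsertion M M' p R) {v : ℕ} (hv : v ≤ p) :
    v ∈ M'.verts ↔ v ∈ M.verts := by
  rw [← h.mem_iff, shift_of_le hv]

theorem IsInsertion.succ_mem_verts_of_lt (h : IsInsertion M M' p R) {v : ℕ} (hv : p < v) :
    v + 1 ∈ M'.verts ↔ v ∈ M.verts := by
  rw [← h.mem_iff, shift_of_lt hv]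

theorem IsInsertion.rankType_succ_eq {q k : ℕ} {ι : Type*} {a b : ι → ℕ}
    (hp : IsInsertion M M' p R) (hq : IsInsertion M M' q R) (hpq : p < q)
    (hleft : ∀ v ∈ M.verts, v ≤ q →
      M.rankType k (Option.elim' v a) = M'.rankType k (Option.elim' v b))
    (hright : ∀ v ∈ M.verts, q ≤ v →
      M.rankType k (Option.elim' v a) = M'.rankType k (Option.elim' (v + 1) b)) :
    M.rankType (k + 1) a = M'.rankType (k + 1) b := by
  refine rankType_succ_eq_iff.2 ⟨fun v hv => ?_, fun w hw => ?_⟩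
  · rcases le_total v q with hvq | hvq
    · exact ⟨v, (hq.mem_verts_of_le hvq).2 hv, hleft v hv hvq⟩
    · exact ⟨v + 1, (hp.succ_mem_verts_of_lt (by omega)).2 hv, hright v hv hvq⟩
  · rcases le_or_gt w q with hwq | hwq
    · have hw' := (hq.mem_verts_of_le hwq).1 hw
      exact ⟨w, hw', hleft w hw' hwq⟩
    · obtain ⟨v, rfl⟩ := Nat.exists_eq_add_of_le' (Nat.one_le_of_lt hwq)
      have hv := (hp.succ_mem_verts_of_lt (by omega)).1 hw
      exact ⟨v, hv, hright v hv (by omega)⟩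

/-- Spoiler cannot locate the insertion: whichever vertex he picks, one half of the current window
avoids it, and the vertex can be regarded as inserted in that half. -/
theorem rankType_eq_rankType_shift (hR : 0 < R)
    (hins : ∀ p, lo ≤ p → p + R ≤ hi → IsInsertion M M' p R) (k : ℕ) {ι : Type*} {a : ι → ℕ}
    (hlo : lo ≤ p) (hhi : p + 2 ^ k * R ≤ hi) (ha : ∀ i, a i ∈ M.verts)
    (hap : ∀ i, a i ≤ p ∨ p + 2 ^ k * R ≤ a i) :
    M.rankType k a = M'.rankType k (shift p ∘ a) := by
  induction k generalizing ι p with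
  | zero =>
    simp only [pow_zero, one_mul] at hhi hap
    have hp := hins p hlo hhi
    exact rankType_zero_eq_iff.2 ⟨fun i j => (shift_injective p).eq_iff.symm,
      fun i j => (hp.adj_iff _ (ha i) _ (ha j) (hap i) (hap j)).symm,
      fun i => (hp.label_eq _ (ha i) (hap i)).symm⟩
  | succ k ih =>
    set r := 2 ^ k * R
    have hrpos : 0 < r := by positivity
    have hRr : R ≤ r := Nat.le_mul_of_pos_left R (by positivity)
    have hdouble : 2 ^ (k + 1) * R = r + r := by rw [pow_succ', mul_assoc, two_mul]
    rw [hdouble] at hhi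
    simp only [hdouble] at hap
    have hleft {v : ℕ} (hv : v ∈ M.verts) (hvp : v ≤ p + r) :
        M.rankType k (Option.elim' v a) = M'.rankType k (Option.elim' v (shift p ∘ a)) := by
      have hap' (i : ι) : a i ≤ p + r ∨ p + r + r ≤ a i := by have := hap i; omega
      have hpr : shift (p + r) ∘ a = shift p ∘ a :=
        funext fun i => shift_eq_shift (by have := hap i; omega)
      rw [← hpr, ← shift_of_le hvp, ← comp_optionElim, shift_of_le hvp]
      exact ih (by omega) (by omega) (Option.rec hv ha) (Option.rec (Or.inl hvp) hap')
    have hright {v : ℕ} (hv : v ∈ M.verts) (hvp : p + r ≤ v) :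
        M.rankType k (Option.elim' v a) = M'.rankType k (Option.elim' (v + 1) (shift p ∘ a)) := by
      rw [← shift_of_lt (show p < v by omega), ← comp_optionElim]
      have hap' (i : ι) : a i ≤ p ∨ p + r ≤ a i := by have := hap i; omega
      exact ih hlo (by omega) (Option.rec hv ha) (Option.rec (Or.inr hvp) hap')
    exact (hins p hlo (by omega)).rankType_succ_eq (hins (p + r) (by omega) (by omega))
      (by omega) (fun _ => hleft) (fun _ => hright)

end LabelledGraph

/-! ### Joining a vertex to a graph -/

section JoinVertex

variable {V : Type*} {g : SimpleGraph V} {a u v : V} {S : Set V}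

/-- The graph obtained from `g` by joining the vertex `a` to the vertices in `S`. -/
def joinVertex (g : SimpleGraph V) (a : V) (S : Set V) : SimpleGraph V :=
  g ⊔ SimpleGraph.fromRel fun u v => u = a ∧ v ∈ S

theorem joinVertex_adj_of_ne (hu : u ≠ a) (hv : v ≠ a) :
    (joinVertex g a S).Adj u v ↔ g.Adj u v := by
  simp [joinVertex, hu, hv]

theorem joinVertex_adj_self (ha : a ∉ g.support) (haS : a ∉ S) :
    (joinVertex g a S).Adj a v ↔ v ∈ S := by
  have hav : ¬ g.Adj a v := fun h => ha ⟨v, h⟩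
  simp only [joinVertex, SimpleGraph.sup_adj, hav, SimpleGraph.fromRel_adj]
  grind

theorem eq_of_adj_iff_of_adj_self_iff {g' : SimpleGraph V} (a : V)
    (hne : ∀ u v, u ≠ a → v ≠ a → (g.Adj u v ↔ g'.Adj u v))
    (hself : ∀ v, g.Adj a v ↔ g'.Adj a v) : g = g' := by
  ext u v
  by_cases hu : u = a
  · rw [hu, hself]
  by_cases hv : v = a
  · rw [hv, g.adj_comm, hself, g'.adj_comm]
  exact hne u v hu hv

theorem eq_of_joinVertex_eq {g' : SimpleGraph V} (hg : a ∉ g.support) (hg' : a ∉ g'.support)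
    (h : joinVertex g a S = joinVertex g' a S) : g = g' := by
  refine eq_of_adj_iff_of_adj_self_iff a (fun u v hu hv => ?_)
    fun v => iff_of_false (fun h => hg ⟨v, h⟩) fun h => hg' ⟨v, h⟩
  rw [← joinVertex_adj_of_ne (S := S) hu hv, h, joinVertex_adj_of_ne hu hv]

theorem joinVertex_support_subset (S : Set V) :
    (joinVertex g a S).support ⊆ insert a (g.support ∪ S) := by
  rintro u ⟨v, h⟩
  simp only [joinVertex, SimpleGraph.sup_adj, SimpleGraph.fromRel_adj] at h
  rcases h with h | ⟨-, ⟨rfl, -⟩ | ⟨-, h⟩⟩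
  · exact Or.inr (Or.inl ⟨v, h⟩)
  · exact Or.inl rfl
  · exact Or.inr (Or.inr h)

end JoinVertex

section Degrees

variable {g : SimpleGraph ℕ} {n v : ℕ} {S : Finset ℕ}

theorem mem_nbrsIn {u : ℕ} : u ∈ nbrsIn g n v ↔ u ∈ Icc 1 n ∧ g.Adj v u := mem_filter

theorem succ_notMem_of_subset_Icc {S : Set ℕ} (hS : S ⊆ Set.Icc 1 n) : n + 1 ∉ S :=
  fun h => (hS h).2.not_gt n.lt_succ_self

theorem nbrsIn_joinVertex_self (hg : g.support ⊆ Set.Icc 1 n) (hS : S ⊆ Icc 1 n) :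
    nbrsIn (joinVertex g (n + 1) S) (n + 1) (n + 1) = S := by
  have hS' : (S : Set ℕ) ⊆ Set.Icc 1 n := by rwa [← coe_Icc, coe_subset]
  ext u
  rw [mem_nbrsIn, joinVertex_adj_self (succ_notMem_of_subset_Icc hg)
    (succ_notMem_of_subset_Icc hS'), mem_coe, and_iff_right_iff_imp]
  exact fun hu => Icc_subset_Icc_right n.le_succ (hS hu)

theorem degIn_joinVertex_self (hg : g.support ⊆ Set.Icc 1 n) (hS : S ⊆ Icc 1 n) :
    degIn (joinVertex g (n + 1) S) (n + 1) (n + 1) = #S :=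
  congrArg card (nbrsIn_joinVertex_self hg hS)

theorem degIn_joinVertex (hg : g.support ⊆ Set.Icc 1 n) (hS : S ⊆ Icc 1 n) (hv : v ∈ Icc 1 n) :
    degIn (joinVertex g (n + 1) S) (n + 1) v = degIn g n v + if v ∈ S then 1 else 0 := by
  have hS' : (S : Set ℕ) ⊆ Set.Icc 1 n := by rwa [← coe_Icc, coe_subset]
  have hne {u : ℕ} (hu : u ∈ Icc 1 n) : u ≠ n + 1 := by rw [mem_Icc] at hu; omega
  have hold : ((Icc 1 n).filter fun u => (joinVertex g (n + 1) S).Adj v u) =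
      (Icc 1 n).filter fun u => g.Adj v u :=
    filter_congr fun u hu => joinVertex_adj_of_ne (hne hv) (hne hu)
  have hnew : (joinVertex g (n + 1) S).Adj v (n + 1) ↔ v ∈ S := by
    rw [SimpleGraph.adj_comm, joinVertex_adj_self (succ_notMem_of_subset_Icc hg)
      (succ_notMem_of_subset_Icc hS'), mem_coe]
  simp only [degIn]
  rw [← insert_Icc_right_eq_Icc_add_one (by omega), filter_insert, hold]
  simp only [hnew]
  split_ifs
  · rw [card_insert_of_notMem (by simp)]
  · rfl

theorem IsUAStep.nbrsIn_subset_Icc {m : ℕ} {g' : SimpleGraph ℕ} (h : IsUAStep m n g g') :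
    nbrsIn g' (n + 1) (n + 1) ⊆ Icc 1 n := fun u hu => (h.2.2.2 u (mem_nbrsIn.1 hu).2).1

theorem IsUAStep.eq_joinVertex {m : ℕ} {g' : SimpleGraph ℕ} (hg : g.support ⊆ Set.Icc 1 n)
    (h : IsUAStep m n g g') : g' = joinVertex g (n + 1) (nbrsIn g' (n + 1) (n + 1)) := by
  have hnbrs : (nbrsIn g' (n + 1) (n + 1) : Set ℕ) ⊆ Set.Icc 1 n := by
    rw [← coe_Icc, coe_subset]
    exact h.nbrsIn_subset_Icc
  refine eq_of_adj_iff_of_adj_self_iff (n + 1) (fun u v hu hv => ?_) fun v => ?_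
  · rw [h.2.1 u v hu hv, joinVertex_adj_of_ne hu hv]
  · rw [joinVertex_adj_self (succ_notMem_of_subset_Icc hg) (succ_notMem_of_subset_Icc hnbrs),
      mem_coe, mem_nbrsIn, iff_and_self]
    exact fun hv => (h.1 _ v hv).2

theorem finite_setOf_support_subset {V : Type*} {s : Set V} (hs : s.Finite) :
    {g : SimpleGraph V | g.support ⊆ s}.Finite := by
  refine Set.Finite.of_finite_image (f := fun g => {p : V × V | g.Adj p.1 p.2})
    ((hs.prod hs).finite_subsets.subset ?_) ?_
  · rintro _ ⟨g, hg, rfl⟩ p hp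
    exact ⟨hg ⟨_, hp⟩, hg ⟨_, hp.symm⟩⟩
  · intro g _ g' _ h
    ext u v
    exact Set.ext_iff.1 h (u, v)

end Degrees

/-! ### Attachment states -/

/-- A graph that an attachment process with parameter `m` can reach at time `n`, recorded through
the invariants that the argument needs: the total number of edges that the vertices can still
receive, and the fact that the vertices `n, n - 1, …, n - m + 1` are still open. -/
structure AttachState (m : ℕ) where
  n : ℕ
  graph : SimpleGraph ℕ
  lt_n : m < n
  support_subset : graph.support ⊆ Set.Icc 1 n
  sum_deficit : ∑ v ∈ Icc 1 n, (2 * m - degIn graph n v) = m * (m + 1)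
  degIn_recent_le : ∀ j < m, degIn graph n (n - j) ≤ m + j

namespace AttachState

variable {m : ℕ} {x y : AttachState m} {u v k : ℕ} {S T : Finset ℕ}

/-- The number of edges that `v` can still receive. -/
def deficit (x : AttachState m) (v : ℕ) : ℕ := 2 * m - degIn x.graph x.n v

/-- The vertices of degree less than `2 * m`. -/
def openVerts (x : AttachState m) : Finset ℕ :=
  (Icc 1 x.n).filter fun v => degIn x.graph x.n v < 2 * m

/-- The number of open vertices younger than `v`; the open vertices are thus numbered `0, 1, …`
starting from the youngest. -/
def slot (x : AttachState m) (v : ℕ) : ℕ := #{u ∈ x.openVerts | v < u}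

/-- The sets to which the next vertex can be joined. -/
def admissible (x : AttachState m) : Finset (Finset ℕ) := x.openVerts.powersetCard m

theorem mem_openVerts : v ∈ x.openVerts ↔ v ∈ Icc 1 x.n ∧ 0 < x.deficit v := by
  rw [openVerts, mem_filter, deficit, tsub_pos_iff_lt]

theorem openVerts_subset : x.openVerts ⊆ Icc 1 x.n := filter_subset _ _

theorem mem_openVerts_of_lt (hv : x.n < v + m) (hvn : v ≤ x.n) : v ∈ x.openVerts := by
  have hle := x.degIn_recent_le (x.n - v) (by omega)
  rw [Nat.sub_sub_self hvn] at hle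
  have := x.lt_n
  exact mem_filter.2 ⟨mem_Icc.2 (by omega), by omega⟩

theorem slot_lt_slot_iff (hu : u ∈ x.openVerts) : x.slot u < x.slot v ↔ v < u := by
  refine ⟨fun h => ?_, fun h => card_lt_card (ssubset_iff_of_subset ?_ |>.2 ⟨u, ?_⟩)⟩
  · by_contra! hvu
    refine h.not_ge (card_le_card (monotone_filter_right _ fun w _ hw => hvu.trans_lt hw))
  · exact monotone_filter_right _ fun w _ hw => h.trans hw
  · simp [hu, h]

theorem slot_injOn : Set.InjOn x.slot x.openVerts := fun _ hu _ hv h =>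
  le_antisymm (not_lt.1 fun hlt => ((slot_lt_slot_iff hu).2 hlt).ne h)
    (not_lt.1 fun hlt => ((slot_lt_slot_iff hv).2 hlt).ne' h)

theorem slot_eq_sub (hv : x.n ≤ v + m) : x.slot v = x.n - v := by
  have : {u ∈ x.openVerts | v < u} = Ioc v x.n := by
    ext u
    rw [mem_filter, mem_Ioc]
    refine ⟨fun h => ⟨h.2, (mem_Icc.1 (openVerts_subset h.1)).2⟩, fun h =>
      ⟨mem_openVerts_of_lt (by omega) h.2, h.1⟩⟩
  rw [slot, this, Nat.card_Ioc]

theorem card_openVerts_le (x : AttachState m) : #x.openVerts ≤ m * (m + 1) := by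
  calc #x.openVerts = ∑ v ∈ x.openVerts, 1 := card_eq_sum_ones _
    _ ≤ ∑ v ∈ x.openVerts, x.deficit v := sum_le_sum fun v hv => (mem_openVerts.1 hv).2
    _ ≤ ∑ v ∈ Icc 1 x.n, x.deficit v := sum_le_sum_of_subset openVerts_subset
    _ = m * (m + 1) := x.sum_deficit

theorem slot_le (x : AttachState m) (v : ℕ) : x.slot v ≤ m * (m + 1) :=
  (card_filter_le _ _).trans x.card_openVerts_le

theorem mem_admissible : S ∈ x.admissible ↔ S ⊆ x.openVerts ∧ #S = m := mem_powersetCard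

theorem subset_Icc_of_mem_admissible (hS : S ∈ x.admissible) : S ⊆ Icc 1 x.n :=
  (mem_admissible.1 hS).1.trans openVerts_subset

theorem deficit_joinVertex (hS : S ∈ x.admissible) (hv : v ∈ Icc 1 x.n) :
    2 * m - degIn (joinVertex x.graph (x.n + 1) S) (x.n + 1) v =
      x.deficit v - if v ∈ S then 1 else 0 := by
  rw [degIn_joinVertex x.support_subset (subset_Icc_of_mem_admissible hS) hv, ← Nat.sub_sub,
    deficit]

theorem degIn_joinVertex_new (hS : S ∈ x.admissible) :
    degIn (joinVertex x.graph (x.n + 1) S) (x.n + 1) (x.n + 1) = m :=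
  (degIn_joinVertex_self x.support_subset (subset_Icc_of_mem_admissible hS)).trans
    (mem_admissible.1 hS).2

theorem sum_deficit_joinVertex (hS : S ∈ x.admissible) :
    ∑ v ∈ Icc 1 (x.n + 1), (2 * m - degIn (joinVertex x.graph (x.n + 1) S) (x.n + 1) v) =
      m * (m + 1) := by
  have hpos : ∀ v ∈ Icc 1 x.n, (if v ∈ S then 1 else 0) ≤ x.deficit v := fun v _ => by
    split_ifs with h
    · exact (mem_openVerts.1 ((mem_admissible.1 hS).1 h)).2
    · exact Nat.zero_le _
  have hcard : ∑ v ∈ Icc 1 x.n, (if v ∈ S then 1 else 0) = m := by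
    rw [sum_ite_mem, inter_eq_right.2 (subset_Icc_of_mem_admissible hS), ← card_eq_sum_ones,
      (mem_admissible.1 hS).2]
  have hsum : ∑ v ∈ Icc 1 x.n, x.deficit v = m * (m + 1) := x.sum_deficit
  have hle : m ≤ m * (m + 1) := Nat.le_mul_of_pos_right m m.succ_pos
  rw [sum_Icc_succ_top (by omega), sum_congr rfl fun v hv => deficit_joinVertex hS hv,
    sum_tsub_distrib _ hpos, hcard, hsum, degIn_joinVertex_new hS]
  omega

theorem degIn_joinVertex_recent_le (hS : S ∈ x.admissible) {j : ℕ} (hj : j < m) :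
    degIn (joinVertex x.graph (x.n + 1) S) (x.n + 1) (x.n + 1 - j) ≤ m + j := by
  obtain _ | j := j
  · exact (degIn_joinVertex_new hS).le
  · have hn := x.lt_n
    have hle := x.degIn_recent_le j (by omega)
    rw [Nat.add_sub_add_right, degIn_joinVertex x.support_subset
      (subset_Icc_of_mem_admissible hS) (mem_Icc.2 (by omega))]
    split_ifs <;> omega

/-- The state reached by joining the new vertex `x.n + 1` to `S`; the junk value is `x` itself
if `S` is not admissible. -/
def attach (x : AttachState m) (S : Finset ℕ) : AttachState m :=
  if hS : S ∈ x.admissible then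
    { n := x.n + 1
      graph := joinVertex x.graph (x.n + 1) S
      lt_n := x.lt_n.trans x.n.lt_succ_self
      support_subset := by
        refine (joinVertex_support_subset _).trans (Set.insert_subset (by simp) ?_)
        refine (Set.union_subset x.support_subset ?_).trans
          (Set.Icc_subset_Icc_right x.n.le_succ)
        rw [← coe_Icc, coe_subset]
        exact subset_Icc_of_mem_admissible hS
      sum_deficit := sum_deficit_joinVertex hS
      degIn_recent_le := fun _ => degIn_joinVertex_recent_le hS }
  else x

theorem attach_n (hS : S ∈ x.admissible) : (x.attach S).n = x.n + 1 := by
  rw [attach, dif_pos hS]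

theorem attach_graph (hS : S ∈ x.admissible) :
    (x.attach S).graph = joinVertex x.graph (x.n + 1) S := by
  rw [attach, dif_pos hS]

theorem attach_adj_of_mem (hS : S ∈ x.admissible) (hu : u ∈ Icc 1 x.n) (hv : v ∈ Icc 1 x.n) :
    (x.attach S).graph.Adj u v ↔ x.graph.Adj u v := by
  rw [mem_Icc] at hu hv
  rw [attach_graph hS]
  exact joinVertex_adj_of_ne (by omega) (by omega)

theorem nbrsIn_attach_new (hS : S ∈ x.admissible) :
    nbrsIn (x.attach S).graph (x.n + 1) (x.n + 1) = S := by
  rw [attach_graph hS]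
  exact nbrsIn_joinVertex_self x.support_subset (subset_Icc_of_mem_admissible hS)

theorem attach_adj_new (hS : S ∈ x.admissible) (hv : v ∈ Icc 1 x.n) :
    (x.attach S).graph.Adj (x.n + 1) v ↔ v ∈ S := by
  conv_rhs => rw [← nbrsIn_attach_new hS, mem_nbrsIn]
  exact (and_iff_right (Icc_subset_Icc_right x.n.le_succ hv)).symm

theorem deficit_attach_old (hS : S ∈ x.admissible) (hv : v ∈ Icc 1 x.n) :
    (x.attach S).deficit v = x.deficit v - if v ∈ S then 1 else 0 := by
  rw [deficit, attach_n hS, attach_graph hS, deficit_joinVertex hS hv]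

theorem deficit_attach_new (hS : S ∈ x.admissible) : (x.attach S).deficit (x.n + 1) = m := by
  rw [deficit, attach_n hS, attach_graph hS, degIn_joinVertex_new hS]
  omega

theorem openVerts_attach (hm : 0 < m) (hS : S ∈ x.admissible) :
    (x.attach S).openVerts = insert (x.n + 1) {u ∈ x.openVerts | 0 < (x.attach S).deficit u} := by
  ext u
  rw [mem_openVerts, attach_n hS, ← insert_Icc_right_eq_Icc_add_one (by omega), mem_insert,
    mem_insert, mem_filter, mem_openVerts, or_and_right]
  refine or_congr (and_iff_left_of_imp ?_) ?_
  · rintro rfl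
    rwa [deficit_attach_new hS]
  · rw [and_assoc, and_congr_right_iff]
    intro hu
    rw [deficit_attach_old hS hu, iff_and_self]
    exact fun h => h.trans_le (Nat.sub_le _ _)

theorem slot_attach_old (hm : 0 < m) (hS : S ∈ x.admissible) (hv : v ∈ Icc 1 x.n) :
    (x.attach S).slot v = #{u ∈ x.openVerts | v < u ∧ 0 < (x.attach S).deficit u} + 1 := by
  have hvn : v < x.n + 1 := Nat.lt_succ_of_le (mem_Icc.1 hv).2
  have hnew : x.n + 1 ∉ x.openVerts := fun h => by simpa using openVerts_subset h
  rw [slot, openVerts_attach hm hS, filter_insert, if_pos hvn, filter_filter,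
    card_insert_of_notMem fun h => hnew (mem_filter.1 h).1]
  simp only [and_comm]

theorem slot_attach_new (hS : S ∈ x.admissible) : (x.attach S).slot (x.n + 1) = 0 := by
  have := slot_eq_sub (x := x.attach S) (v := x.n + 1) (by rw [attach_n hS]; omega)
  rw [this, attach_n hS, Nat.sub_self]

/-- The isomorphism-invariant part of a vertex: its slot and its deficit. -/
def label (x : AttachState m) (v : ℕ) : ℕ × ℕ := (x.slot v, x.deficit v)

/-- The graph of a state with its vertices labelled by slot and deficit. -/
def labelled (x : AttachState m) : LabelledGraph ℕ (ℕ × ℕ) := ⟨Set.Icc 1 x.n, x.graph, x.label⟩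

/-- The labels of the open vertices. -/
def openLabels (x : AttachState m) : Finset (ℕ × ℕ) := x.openVerts.image x.label

/-- The open vertices with slot in `T`. -/
def chosen (x : AttachState m) (T : Finset ℕ) : Finset ℕ := {v ∈ x.openVerts | x.slot v ∈ T}

/-- The deficit of a vertex with label `p` after the vertices with slot in `T` were chosen. -/
def deficitAfter (T : Finset ℕ) (p : ℕ × ℕ) : ℕ := p.2 - if p.1 ∈ T then 1 else 0

/-- The label of a vertex with label `p` after the vertices with slot in `T` were chosen, if `L` is
the set of labels of open vertices. -/
def relabel (L : Finset (ℕ × ℕ)) (T : Finset ℕ) (p : ℕ × ℕ) : ℕ × ℕ :=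
  (#{q ∈ L | q.1 < p.1 ∧ 0 < deficitAfter T q} + 1, deficitAfter T p)

theorem image_fst_openLabels (x : AttachState m) :
    x.openLabels.image Prod.fst = x.openVerts.image x.slot := image_image

theorem label_injOn : Set.InjOn x.label x.openVerts :=
  fun _ hu _ hv h => slot_injOn hu hv (congrArg Prod.fst h)

theorem image_slot_chosen (hT : T ⊆ x.openVerts.image x.slot) : (x.chosen T).image x.slot = T := by
  rw [chosen, ← filter_image (p := (· ∈ T)), filter_mem_eq_inter, inter_eq_right.2 hT]

theorem chosen_image_slot (hS : S ⊆ x.openVerts) : x.chosen (S.image x.slot) = S := by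
  ext v
  rw [chosen, mem_filter]
  refine ⟨fun ⟨hv, h⟩ => ?_, fun hv => ⟨hS hv, mem_image_of_mem _ hv⟩⟩
  obtain ⟨u, hu, huv⟩ := mem_image.1 h
  rwa [← slot_injOn (hS hu) hv huv]

theorem chosen_mem_admissible (hT : T ∈ (x.openLabels.image Prod.fst).powersetCard m) :
    x.chosen T ∈ x.admissible := by
  obtain ⟨hT, hcard⟩ := mem_powersetCard.1 (image_fst_openLabels x ▸ hT)
  have hinj : Set.InjOn x.slot (x.chosen T) := slot_injOn.mono (coe_subset.2 (filter_subset _ _))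
  exact mem_admissible.2 ⟨filter_subset _ _, by
    rw [← card_image_of_injOn hinj, image_slot_chosen hT, hcard]⟩

theorem deficit_attach_chosen (hT : x.chosen T ∈ x.admissible) (hv : v ∈ Icc 1 x.n) :
    (x.attach (x.chosen T)).deficit v = deficitAfter T (x.label v) := by
  have hmem : v ∈ x.chosen T ↔ 0 < x.deficit v ∧ x.slot v ∈ T := by
    rw [chosen, mem_filter, mem_openVerts, and_iff_right hv]
  change _ = x.deficit v - if x.slot v ∈ T then 1 else 0
  simp only [deficit_attach_old hT hv, hmem]
  by_cases h : x.slot v ∈ T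
  · simp only [and_iff_left h, if_pos h]
    split_ifs <;> omega
  · rw [if_neg h, if_neg fun h' => h h'.2]

theorem label_attach_chosen (hm : 0 < m) (hT : x.chosen T ∈ x.admissible) (hv : v ∈ Icc 1 x.n) :
    (x.attach (x.chosen T)).label v = relabel x.openLabels T (x.label v) := by
  have hfilter : {u ∈ x.openVerts | v < u ∧ 0 < (x.attach (x.chosen T)).deficit u} =
      {u ∈ x.openVerts | (x.label u).1 < (x.label v).1 ∧ 0 < deficitAfter T (x.label u)} :=
    filter_congr fun u hu => by
      rw [deficit_attach_chosen hT (openVerts_subset hu)]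
      exact and_congr_left fun _ => (slot_lt_slot_iff hu).symm
  rw [label, relabel, slot_attach_old hm hT hv, deficit_attach_chosen hT hv, hfilter, openLabels,
    filter_image, card_image_of_injOn (label_injOn.mono (coe_subset.2 (filter_subset _ _)))]

theorem labelled_isLabelledExtension (hm : 0 < m)
    (hT : T ∈ (x.openLabels.image Prod.fst).powersetCard m) :
    x.labelled.IsLabelledExtension (x.attach (x.chosen T)).labelled (x.n + 1)
      {p | p.1 ∈ T ∧ 0 < p.2} (relabel x.openLabels T) (0, m) := by
  have hS := chosen_mem_admissible hT
  exact
    { notMem := fun h => h.2.not_gt x.n.lt_succ_self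
      verts_eq := by
        ext v
        simp only [labelled, attach_n hS, Set.mem_insert_iff, Set.mem_Icc]
        omega
      adj_old := fun u hu v hv => attach_adj_of_mem hS (mem_Icc.2 hu) (mem_Icc.2 hv)
      adj_new := fun v hv => by
        refine (attach_adj_new hS (mem_Icc.2 hv)).trans ?_
        rw [chosen, mem_filter, mem_openVerts, and_iff_right (mem_Icc.2 hv), and_comm]
        rfl
      label_old := fun v hv => label_attach_chosen hm hS (mem_Icc.2 hv)
      label_new := Prod.ext (slot_attach_new hS) (deficit_attach_new hS) }

theorem label_le (x : AttachState m) (v : ℕ) : x.label v ≤ (m * (m + 1), 2 * m) :=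
  ⟨x.slot_le v, Nat.sub_le _ _⟩

theorem labelled_verts_nonempty (x : AttachState m) : x.labelled.verts.Nonempty :=
  ⟨x.n, by have := x.lt_n; omega, le_rfl⟩

/-- The statistic along which the attachment chain is lumped to a finite chain: the rank `k + 1`
type of the labelled graph. -/
def colour (k : ℕ) (x : AttachState m) : RankType (ℕ × ℕ) (k + 1) Empty :=
  x.labelled.rankType (k + 1) (Empty.elim : Empty → ℕ)

theorem finite_range_colour (m k : ℕ) : (Set.range (colour (m := m) k)).Finite := by
  refine (LabelledGraph.finite_setOf_rankType ℕ
    (Set.finite_Iic (m * (m + 1), 2 * m)) (k + 1)).subset ?_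
  rintro _ ⟨x, rfl⟩
  exact ⟨x.labelled, Empty.elim, fun v _ => x.label_le v, fun i => i.elim, rfl⟩

theorem openLabels_eq_of_colour_eq (h : x.colour k = y.colour k) :
    x.openLabels = y.openLabels := by
  have himage (z : AttachState m) :
      (z.openLabels : Set (ℕ × ℕ)) = {p ∈ z.labelled.label '' z.labelled.verts | 0 < p.2} := by
    ext p
    simp only [openLabels, coe_image, Set.mem_image, mem_coe, mem_openVerts, mem_Icc, labelled,
      Set.mem_Icc, Set.mem_ofPred_eq]
    constructor
    · rintro ⟨v, ⟨hv, hpos⟩, rfl⟩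
      exact ⟨⟨v, hv, rfl⟩, hpos⟩
    · rintro ⟨⟨v, hv, rfl⟩, hpos⟩
      exact ⟨v, ⟨hv, hpos⟩, rfl⟩
  rw [← coe_inj, himage, himage, LabelledGraph.image_label_eq_of_rankType_succ_eq h]

theorem colour_attach_chosen_eq (hm : 0 < m) (h : x.colour k = y.colour k)
    (hT : T ∈ (x.openLabels.image Prod.fst).powersetCard m) :
    (x.attach (x.chosen T)).colour k = (y.attach (y.chosen T)).colour k := by
  have hxy := openLabels_eq_of_colour_eq h
  exact (labelled_isLabelledExtension hm hT).rankType_eq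
    (hxy ▸ labelled_isLabelledExtension hm (hxy ▸ hT)) x.labelled_verts_nonempty
    (fun i => i.elim) (fun i => i.elim) h

open scoped BigOperators

/-- The generator of the attachment chain: `meanStep m f x` is the expectation of `f` after one
uniform attachment step from `x`. -/
def meanStep (m : ℕ) : Module.End ℝ (AttachState m → ℝ) where
  toFun f x := 𝔼 S ∈ x.admissible, f (x.attach S)
  map_add' _ _ := funext fun _ => expect_add_distrib _ _ _
  map_smul' _ _ := funext fun _ => (mul_expect _ _ _).symm

theorem meanStep_apply (f : AttachState m → ℝ) (x : AttachState m) :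
    meanStep m f x = 𝔼 S ∈ x.admissible, f (x.attach S) := rfl

theorem meanStep_apply_eq_expect_chosen (f : AttachState m → ℝ) (x : AttachState m) :
    meanStep m f x =
      𝔼 T ∈ (x.openLabels.image Prod.fst).powersetCard m, f (x.attach (x.chosen T)) := by
  refine expect_nbij' (fun S => S.image x.slot) x.chosen (fun S hS => ?_)
    (fun T => chosen_mem_admissible) (fun S hS => chosen_image_slot (mem_admissible.1 hS).1)
    (fun T hT => ?_) (fun S hS => ?_)
  · obtain ⟨hsub, hcard⟩ := mem_admissible.1 hS
    rw [image_fst_openLabels, mem_powersetCard]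
    exact ⟨image_subset_image hsub,
      (card_image_of_injOn (slot_injOn.mono (coe_subset.2 hsub))).trans hcard⟩
  · rw [image_fst_openLabels] at hT
    exact image_slot_chosen (mem_powersetCard.1 hT).1
  · rw [chosen_image_slot (mem_admissible.1 hS).1]

theorem meanStep_factorsThrough_colour (hm : 0 < m) {f : AttachState m → ℝ}
    (hf : f.FactorsThrough (colour k)) : (meanStep m f).FactorsThrough (colour k) := by
  intro x y h
  rw [meanStep_apply_eq_expect_chosen, meanStep_apply_eq_expect_chosen,
    ← openLabels_eq_of_colour_eq h]
  exact expect_congr rfl fun T hT => hf (colour_attach_chosen_eq hm h hT)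

/-- The step that joins the new vertex to the `m` youngest ones. -/
def advance (x : AttachState m) : AttachState m := x.attach (Ioc (x.n - m) x.n)

theorem Ioc_mem_admissible (x : AttachState m) : Ioc (x.n - m) x.n ∈ x.admissible := by
  refine mem_admissible.2 ⟨fun v hv => ?_, by have := x.lt_n; rw [Nat.card_Ioc]; omega⟩
  rw [mem_Ioc] at hv
  exact mem_openVerts_of_lt (by omega) hv.2

theorem isMarkovCharging_meanStep (m : ℕ) : IsMarkovCharging (meanStep m) advance where
  apply_le hf x := expect_le ⟨_, x.Ioc_mem_admissible⟩ fun _ _ => hf _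
  eq_of_apply_eq := by
    intro f B hf x hx
    refine le_antisymm (hf _) (not_lt.1 fun hlt => hx.not_lt ?_)
    exact expect_lt (fun _ _ => hf _) ⟨_, x.Ioc_mem_admissible, hlt⟩

theorem image_slot_Ioc (x : AttachState m) : (Ioc (x.n - m) x.n).image x.slot = range m := by
  have := x.lt_n
  ext j
  rw [mem_image, mem_range]
  constructor
  · rintro ⟨v, hv, rfl⟩
    rw [mem_Ioc] at hv
    rw [slot_eq_sub (by omega)]
    omega
  · exact fun hj => ⟨x.n - j, by rw [mem_Ioc]; omega, by rw [slot_eq_sub (by omega)]; omega⟩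

theorem colour_comp_advance_factorsThrough (hm : 0 < m) :
    (colour k ∘ advance (m := m)).FactorsThrough (colour k) := by
  have hchosen (z : AttachState m) : z.chosen (range m) = Ioc (z.n - m) z.n := by
    rw [← image_slot_Ioc, chosen_image_slot (mem_admissible.1 z.Ioc_mem_admissible).1]
  have hrange (z : AttachState m) : range m ∈ (z.openLabels.image Prod.fst).powersetCard m := by
    rw [image_fst_openLabels, mem_powersetCard, ← image_slot_Ioc]
    exact ⟨image_subset_image (mem_admissible.1 z.Ioc_mem_admissible).1, by
      rw [image_slot_Ioc, card_range]⟩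
  intro x y h
  have := colour_attach_chosen_eq hm h (hrange x)
  rwa [hchosen, hchosen] at this

/-! ### Joining the youngest vertices -/

theorem advance_n (x : AttachState m) : x.advance.n = x.n + 1 := attach_n x.Ioc_mem_admissible

theorem iterate_advance_n (x : AttachState m) (j : ℕ) : (advance^[j] x).n = x.n + j := by
  induction j with
  | zero => rfl
  | succ j ih => rw [Function.iterate_succ_apply', advance_n, ih, add_assoc]

theorem iterate_advance_adj_old (x : AttachState m) (hu : u ∈ Icc 1 x.n) (hv : v ∈ Icc 1 x.n)
    (j : ℕ) : (advance^[j] x).graph.Adj u v ↔ x.graph.Adj u v := by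
  induction j with
  | zero => rfl
  | succ j ih =>
    have hsub : Icc 1 x.n ⊆ Icc 1 (advance^[j] x).n :=
      Icc_subset_Icc_right (by rw [iterate_advance_n]; omega)
    rw [Function.iterate_succ_apply', advance,
      attach_adj_of_mem (Ioc_mem_admissible _) (hsub hu) (hsub hv), ih]

theorem iterate_advance_adj_new (x : AttachState m) {j : ℕ} (hu : 1 ≤ u) (huv : u < v)
    (hv : x.n < v) (hvj : v ≤ x.n + j) : (advance^[j] x).graph.Adj u v ↔ v ≤ u + m := by
  induction j with
  | zero => omega
  | succ j ih =>
    set y := advance^[j] x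
    have hy : y.n = x.n + j := iterate_advance_n x j
    rw [Function.iterate_succ_apply', advance]
    rcases hvj.lt_or_eq with hvj | rfl
    · rw [attach_adj_of_mem y.Ioc_mem_admissible (by rw [mem_Icc]; omega)
        (by rw [mem_Icc]; omega), ih (by omega)]
    · rw [show x.n + (j + 1) = y.n + 1 by omega, SimpleGraph.adj_comm,
        attach_adj_new y.Ioc_mem_admissible (by rw [mem_Icc]; omega), mem_Ioc]
      omega

theorem deficit_advance_old (hv : v ∈ Icc 1 x.n) :
    x.advance.deficit v = x.deficit v - if x.n < v + m then 1 else 0 := by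
  have hmem : v ∈ Ioc (x.n - m) x.n ↔ x.n < v + m := by rw [mem_Icc] at hv; rw [mem_Ioc]; omega
  rw [advance, deficit_attach_old x.Ioc_mem_admissible hv]
  simp only [hmem]

theorem iterate_advance_deficit_old (hv : v ∈ Icc 1 x.n) (j : ℕ) :
    (advance^[j] x).deficit v = x.deficit v - min j (v + m - x.n) := by
  induction j with
  | zero => simp
  | succ j ih =>
    rw [Function.iterate_succ_apply', deficit_advance_old, ih, iterate_advance_n]
    · split_ifs <;> omega
    · exact Icc_subset_Icc_right (by rw [iterate_advance_n]; omega) hv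

theorem iterate_advance_deficit_new (x : AttachState m) {j : ℕ} (hv : x.n < v)
    (hvj : v ≤ x.n + j) : (advance^[j] x).deficit v = m - (x.n + j - v) := by
  induction j with
  | zero => omega
  | succ j ih =>
    have hn := iterate_advance_n x j
    rw [Function.iterate_succ_apply']
    rcases hvj.lt_or_eq with hvj | rfl
    · rw [deficit_advance_old (by rw [mem_Icc]; omega), ih (by omega), hn]
      split_ifs <;> omega
    · rw [advance, ← add_assoc, ← hn, deficit_attach_new (Ioc_mem_admissible _), Nat.sub_self,
        Nat.sub_zero]

theorem iterate_advance_openVerts (x : AttachState m) {j : ℕ} (hj : m ≤ j) :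
    (advance^[j] x).openVerts =
      {v ∈ Icc 1 x.n | v + m - x.n < x.deficit v} ∪ Ioc (x.n + j - m) (x.n + j) := by
  ext v
  rw [mem_openVerts, iterate_advance_n, mem_union, mem_filter, mem_Ioc]
  rcases le_or_gt v x.n with hv | hv
  · have hold : v ∈ Icc 1 x.n → (advance^[j] x).deficit v = x.deficit v - (v + m - x.n) :=
      fun h => by rw [iterate_advance_deficit_old h, min_eq_right (by omega)]
    simp only [mem_Icc] at hold ⊢
    grind
  · rw [mem_Icc, mem_Icc]
    by_cases hvj : v ≤ x.n + j
    · rw [iterate_advance_deficit_new x hv hvj]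
      omega
    · omega

theorem iterate_advance_slot (x : AttachState m) {j : ℕ} (hj : m ≤ j) (v : ℕ) :
    (advance^[j] x).slot v =
      #{u ∈ Icc 1 x.n | u + m - x.n < x.deficit u ∧ v < u} + min m (x.n + j - v) := by
  have hdisj : Disjoint {u ∈ Icc 1 x.n | u + m - x.n < x.deficit u ∧ v < u}
      {u ∈ Ioc (x.n + j - m) (x.n + j) | v < u} := disjoint_left.2 fun u hu hu' => by
    rw [mem_filter, mem_Icc] at hu
    rw [mem_filter, mem_Ioc] at hu'
    omega
  have hnew : {u ∈ Ioc (x.n + j - m) (x.n + j) | v < u} =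
      Ioc (max (x.n + j - m) v) (x.n + j) := by
    ext u
    rw [mem_filter, mem_Ioc, mem_Ioc]
    omega
  rw [slot, iterate_advance_openVerts x hj, filter_union, filter_filter,
    card_union_of_disjoint hdisj, hnew, Nat.card_Ioc]
  omega

theorem iterate_advance_label_shift (x : AttachState m) {D p : ℕ} (hp : x.n ≤ p)
    (hpD : p + (m + 1) ≤ x.n + D) (hv : 1 ≤ v) (hvD : v ≤ x.n + D)
    (hvp : v ≤ p ∨ p + (m + 1) ≤ v) :
    (advance^[D + 1] x).label (shift p v) = (advance^[D] x).label v := by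
  have hslot : (advance^[D + 1] x).slot (shift p v) = (advance^[D] x).slot v := by
    rw [iterate_advance_slot x (by omega), iterate_advance_slot x (by omega)]
    rcases hvp with hvp | hvp
    · rw [shift_of_le hvp]
      omega
    · have hnone (w : ℕ) (hw : x.n ≤ w) :
          {u ∈ Icc 1 x.n | u + m - x.n < x.deficit u ∧ w < u} = ∅ :=
        filter_eq_empty_iff.2 fun u hu => by rw [mem_Icc] at hu; omega
      rw [shift_of_lt (by omega), hnone _ (by omega), hnone _ (by omega)]
      omega
  have hdeficit : (advance^[D + 1] x).deficit (shift p v) = (advance^[D] x).deficit v := by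
    rcases le_or_gt v x.n with hvn | hvn
    · rw [shift_of_le (by omega), iterate_advance_deficit_old (mem_Icc.2 ⟨hv, hvn⟩),
        iterate_advance_deficit_old (mem_Icc.2 ⟨hv, hvn⟩)]
      omega
    · rw [iterate_advance_deficit_new x hvn hvD, shift]
      split_ifs <;> rw [iterate_advance_deficit_new x] <;> omega
  exact Prod.ext hslot hdeficit

theorem isInsertion_iterate_advance (x : AttachState m) {D p : ℕ} (hp : x.n ≤ p)
    (hpD : p + (m + 1) ≤ x.n + D) :
    (advance^[D] x).labelled.IsInsertion (advance^[D + 1] x).labelled p (m + 1) where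
  mem_iff v := by
    have := x.lt_n
    simp only [labelled, iterate_advance_n, Set.mem_Icc, shift]
    split_ifs <;> omega
  adj_iff := by
    simp only [labelled, iterate_advance_n, Set.mem_Icc]
    intro u hu v hv hup hvp
    wlog huv : u < v generalizing u v
    · rcases (not_lt.1 huv).lt_or_eq with hvu | rfl
      · rw [SimpleGraph.adj_comm, this v hv u hu hvp hup hvu, SimpleGraph.adj_comm]
      · simp only [SimpleGraph.irrefl]
    rcases le_or_gt v x.n with hvn | hvn
    · rw [shift_of_le (by omega), shift_of_le (by omega),
        iterate_advance_adj_old x (mem_Icc.2 (by omega)) (mem_Icc.2 (by omega)),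
        iterate_advance_adj_old x (mem_Icc.2 (by omega)) (mem_Icc.2 (by omega))]
    · rw [iterate_advance_adj_new x hu.1 huv hvn hv.2, shift, shift]
      split_ifs <;> rw [iterate_advance_adj_new x] <;> omega
  label_eq v hv hvp := by
    simp only [labelled, iterate_advance_n] at hv ⊢
    exact iterate_advance_label_shift x hp hpD hv.1 hv.2 hvp

theorem exists_colour_iterate_advance_eq (x : AttachState m) (k : ℕ) :
    ∃ J, (advance^[J + 1] x).colour k = (advance^[J] x).colour k := by
  refine ⟨2 ^ (k + 1) * (m + 1), ?_⟩
  rw [colour, colour, LabelledGraph.rankType_eq_rankType_shift m.succ_pos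
    (fun _ => isInsertion_iterate_advance x) (k + 1) le_rfl le_rfl (fun i => i.elim)
    (fun i => i.elim)]
  exact congrArg _ (funext fun i => i.elim)

theorem satFO_iff_of_colour_eq {φ : Language.graph.Sentence}
    (h : x.colour (quantifierRank φ) = y.colour (quantifierRank φ)) :
    SatFO x.graph x.n φ ↔ SatFO y.graph y.n φ :=
  satFO_iff_of_rankType_eq (Nat.one_le_of_lt x.lt_n) φ
    (LabelledGraph.rankType_eq_of_succ x.labelled_verts_nonempty h)

end AttachState

/-! ### The random process -/

theorem completeOn_support_subset (k : ℕ) : (completeOn k).support ⊆ Set.Icc 1 k := by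
  rintro u ⟨v, h⟩
  simp only [completeOn, SimpleGraph.fromRel_adj, mem_Icc] at h
  exact h.2.elim And.left And.right

theorem degIn_completeOn {k v : ℕ} (hv : v ∈ Icc 1 k) : degIn (completeOn k) k v = k - 1 := by
  have : ((Icc 1 k).filter fun u => (completeOn k).Adj v u) = (Icc 1 k).erase v := by
    ext u
    simp only [mem_filter, mem_erase, completeOn, SimpleGraph.fromRel_adj]
    grind
  rw [degIn, this, card_erase_of_mem hv, Nat.card_Icc, Nat.add_sub_cancel]

/-- The state from which the process starts at time `m + 1`. -/
def AttachState.initial (m : ℕ) : AttachState m where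
  n := m + 1
  graph := completeOn (m + 1)
  lt_n := m.lt_succ_self
  support_subset := completeOn_support_subset _
  sum_deficit := by
    rw [sum_congr rfl fun v hv => by rw [degIn_completeOn hv], sum_const, Nat.card_Icc, smul_eq_mul,
      mul_comm]
    congr 1
    omega
  degIn_recent_le j hj := by
    rw [degIn_completeOn (mem_Icc.2 (by omega))]
    omega

theorem AttachState.isUAStep_attach_iff {m : ℕ} {x : AttachState m} {S : Finset ℕ}
    {g g' : SimpleGraph ℕ} (hg : g.support ⊆ Set.Icc 1 x.n) (h : IsUAStep m x.n g g')
    (hS : S ∈ x.admissible) :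
    g' = (x.attach S).graph ↔ g = x.graph ∧ nbrsIn g' (x.n + 1) (x.n + 1) = S := by
  constructor
  · rintro rfl
    have hnbrs := nbrsIn_attach_new hS
    have hjoin := h.eq_joinVertex hg
    rw [hnbrs, attach_graph hS] at hjoin
    exact ⟨(eq_of_joinVertex_eq (succ_notMem_of_subset_Icc x.support_subset)
      (succ_notMem_of_subset_Icc hg) hjoin).symm, hnbrs⟩
  · rintro ⟨rfl, rfl⟩
    rw [attach_graph hS]
    exact h.eq_joinVertex hg

theorem AttachState.nbrsIn_mem_admissible {m : ℕ} {x : AttachState m} {g' : SimpleGraph ℕ}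
    (h : IsUAStep m x.n x.graph g') : nbrsIn g' (x.n + 1) (x.n + 1) ∈ x.admissible := by
  obtain ⟨-, -, hcard, hopen⟩ := h
  refine mem_admissible.2 ⟨fun u hu => ?_, hcard⟩
  exact mem_filter.2 (hopen u (mem_nbrsIn.1 hu).2)

theorem ae_mem_of_measure_preimage_eq_one {Ω β : Type*} [MeasurableSpace Ω] {P : Measure Ω}
    [IsProbabilityMeasure P] {f : Ω → β} {s : Set β} (hs : s.Finite)
    (hf : ∀ y ∈ s, MeasurableSet (f ⁻¹' {y})) (h : P (f ⁻¹' s) = 1) : ∀ᵐ ω ∂P, f ω ∈ s := by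
  refine (mem_ae_iff_prob_eq_one ?_).2 h
  change MeasurableSet (f ⁻¹' s)
  rw [← Set.biUnion_preimage_singleton]
  exact hs.measurableSet_biUnion hf

namespace UAProcess

open AttachState

variable {m n : ℕ} {Ω : Type} [MeasurableSpace Ω] {P : Measure Ω} [IsProbabilityMeasure P]
  (X : UAProcess m P) {x : AttachState m} {S : Finset ℕ}

theorem ae_support_subset (hn : m + 1 ≤ n) : ∀ᵐ ω ∂P, (X.G n ω).support ⊆ Set.Icc 1 n := by
  refine ae_mem_of_measure_preimage_eq_one (finite_setOf_support_subset (Set.finite_Icc 1 n))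
    (fun g _ => X.meas n g) (le_antisymm prob_le_one ?_)
  obtain rfl | ⟨l, rfl, hl⟩ : n = m + 1 ∨ ∃ l, n = l + 1 ∧ m + 1 ≤ l := by
    rcases hn.eq_or_lt with h | h
    · exact Or.inl h.symm
    · exact Or.inr ⟨n - 1, by omega, by omega⟩
  · rw [← X.init]
    refine measure_mono fun ω hω => ?_
    rw [Set.mem_ofPred_eq] at hω
    rw [Set.mem_preimage, hω]
    exact completeOn_support_subset (m + 1)
  · rw [← X.stepAdm l hl]
    refine measure_mono fun ω hω => ?_
    rintro u ⟨v, huv⟩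
    exact mem_Icc.1 (hω.1 u v huv).1

theorem ae_isUAStep (hn : m + 1 ≤ n) : ∀ᵐ ω ∂P, IsUAStep m n (X.G n ω) (X.G (n + 1) ω) := by
  have hsupp := (X.ae_support_subset hn).and (X.ae_support_subset (hn.trans n.le_succ))
  have hmem := ae_mem_of_measure_preimage_eq_one (P := P)
    (f := fun ω => (X.G n ω, X.G (n + 1) ω))
    (s := {p | (p.1.support ⊆ Set.Icc 1 n ∧ p.2.support ⊆ Set.Icc 1 (n + 1)) ∧
      IsUAStep m n p.1 p.2})
    (((finite_setOf_support_subset (Set.finite_Icc 1 n)).prod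
      (finite_setOf_support_subset (Set.finite_Icc 1 (n + 1)))).subset fun _ hp => hp.1)
    (fun p _ => ?_) ?_
  · filter_upwards [hmem] with ω hω using hω.2
  · have : (fun ω => (X.G n ω, X.G (n + 1) ω)) ⁻¹' {p} =
        {ω | X.G n ω = p.1} ∩ {ω | X.G (n + 1) ω = p.2} := by
      ext ω
      exact Prod.ext_iff
    rw [this]
    exact (X.meas n _).inter (X.meas (n + 1) _)
  · rw [← X.stepAdm n hn]
    refine measure_congr ?_
    filter_upwards [hsupp] with ω hω
    exact propext (and_iff_right hω)

theorem measureReal_eq_attach (hS : S ∈ x.admissible) :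
    P.real {ω | X.G (x.n + 1) ω = (x.attach S).graph} =
      P.real {ω | X.G x.n ω = x.graph} / #x.admissible := by
  have hsplit : {ω | X.G (x.n + 1) ω = (x.attach S).graph} =ᵐ[P]
      {ω | X.G x.n ω = x.graph ∧ nbrsIn (X.G (x.n + 1) ω) (x.n + 1) (x.n + 1) = S} := by
    filter_upwards [X.ae_support_subset x.lt_n, X.ae_isUAStep x.lt_n] with ω hsupp hstep
    exact propext (isUAStep_attach_iff hsupp hstep hS)
  have hunif := X.stepUnif x.n x.lt_n x.graph
    (fun u v h => ⟨mem_Icc.2 (x.support_subset ⟨v, h⟩), mem_Icc.2 (x.support_subset ⟨u, h.symm⟩)⟩)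
    S (mem_admissible.1 hS).2 fun v hv => mem_filter.1 ((mem_admissible.1 hS).1 hv)
  have hcard : numOpenSets m x.n x.graph = #x.admissible := (card_powersetCard _ _).symm
  rw [measureReal_congr hsplit, measureReal_def, hunif, hcard, ENNReal.toReal_div,
    ENNReal.toReal_natCast, measureReal_def]

theorem ae_eq_preimage_image_attach (x : AttachState m) :
    {ω | X.G x.n ω = x.graph} =ᵐ[P]
      X.G (x.n + 1) ⁻¹' ↑(x.admissible.image fun S => (x.attach S).graph) := by
  filter_upwards [X.ae_support_subset x.lt_n, X.ae_isUAStep x.lt_n] with ω hsupp hstep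
  refine propext ⟨fun h => ?_, fun h => ?_⟩
  · have hx : X.G x.n ω = x.graph := h
    have hS := nbrsIn_mem_admissible (hx ▸ hstep)
    exact mem_image.2 ⟨_, hS, ((isUAStep_attach_iff hsupp hstep hS).2 ⟨hx, rfl⟩).symm⟩
  · obtain ⟨S, hS, hG⟩ := mem_image.1 (mem_coe.1 h)
    exact ((isUAStep_attach_iff hsupp hstep hS).1 hG.symm).1

theorem measureReal_inter_eq_sum (x : AttachState m) (E : Set Ω) :
    P.real ({ω | X.G x.n ω = x.graph} ∩ E) =
      ∑ S ∈ x.admissible, P.real ({ω | X.G (x.n + 1) ω = (x.attach S).graph} ∩ E) := by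
  have hmeas (g : SimpleGraph ℕ) : MeasurableSet (X.G (x.n + 1) ⁻¹' {g}) := X.meas _ g
  have hinj : Set.InjOn (fun S => (x.attach S).graph) x.admissible := fun S hS T hT h => by
    rw [← nbrsIn_attach_new hS, ← nbrsIn_attach_new hT]
    exact congrArg (nbrsIn · _ _) h
  rw [measureReal_congr ((X.ae_eq_preimage_image_attach x).inter (EventuallyEq.refl (ae P) E)),
    ← measureReal_restrict_apply, ← sum_measureReal_preimage_singleton _ fun g _ => hmeas g,
    sum_image hinj]
  · exact sum_congr rfl fun S _ => measureReal_restrict_apply (hmeas _)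
  · rw [← Set.biUnion_preimage_singleton]
    exact measurableSet_biUnion _ fun g _ => hmeas g

theorem measureReal_inter_setOf (q : ℕ → SimpleGraph ℕ → Prop) (j : ℕ) {N : ℕ}
    (hN : N = x.n + j) :
    P.real ({ω | X.G x.n ω = x.graph} ∩ {ω | q N (X.G N ω)}) =
      P.real {ω | X.G x.n ω = x.graph} *
        (meanStep m ^ j) (fun y => if q y.n y.graph then 1 else 0) x := by
  induction j generalizing x with
  | zero =>
    obtain rfl : N = x.n := hN
    have : {ω | X.G x.n ω = x.graph} ∩ {ω | q x.n (X.G x.n ω)} =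
        {ω | X.G x.n ω = x.graph ∧ q x.n x.graph} := by
      ext ω
      exact and_congr_right fun h => iff_of_eq (congrArg (q x.n) h)
    by_cases h : q x.n x.graph <;> simp [this, h]
  | succ j ih =>
    have hstep (S : Finset ℕ) (hS : S ∈ x.admissible) :
        P.real ({ω | X.G (x.n + 1) ω = (x.attach S).graph} ∩ {ω | q N (X.G N ω)}) =
          P.real {ω | X.G x.n ω = x.graph} / #x.admissible *
            (meanStep m ^ j) (fun y => if q y.n y.graph then 1 else 0) (x.attach S) := by
      have := ih (x := x.attach S) (by rw [attach_n hS]; omega)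
      rwa [attach_n hS, X.measureReal_eq_attach hS] at this
    rw [X.measureReal_inter_eq_sum, sum_congr rfl hstep, ← mul_sum, pow_succ',
      Module.End.mul_apply, meanStep_apply, expect_eq_sum_div_card, div_mul_eq_mul_div,
      mul_div_assoc]

theorem measureReal_setOf (q : ℕ → SimpleGraph ℕ → Prop) (j : ℕ) :
    P.real {ω | q (j + (m + 1)) (X.G (j + (m + 1)) ω)} =
      (meanStep m ^ j) (fun y => if q y.n y.graph then 1 else 0) (initial m) := by
  set E := {ω | q (j + (m + 1)) (X.G (j + (m + 1)) ω)}
  have hinit : {ω | X.G (m + 1) ω = completeOn (m + 1)} =ᵐ[P] Set.univ :=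
    ae_eq_univ.2 ((prob_compl_eq_zero_iff (X.meas _ _)).2 X.init)
  have h : P.real ({ω | X.G (m + 1) ω = completeOn (m + 1)} ∩ E) =
      P.real {ω | X.G (m + 1) ω = completeOn (m + 1)} * _ :=
    X.measureReal_inter_setOf (x := initial m) q j (Nat.add_comm j (m + 1))
  rwa [measureReal_congr hinit, measureReal_congr (hinit.inter (EventuallyEq.refl (ae P) E)),
    probReal_univ, one_mul, Set.univ_inter] at h

end UAProcess

/-- For every integer `m > 1`, the random uniform attachment graph process
with degree cap `d = 2m` obeys the first-order convergence law: for every first-order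
sentence `φ` in the language of graphs, the probability `P(G n ⊨ φ)` converges as
`n → ∞`. -/
theorem uniform_attachment_first_order_convergence_law
    (m : ℕ) (hm : 1 < m)
    {Ω : Type} [MeasurableSpace Ω] (P : Measure Ω) [IsProbabilityMeasure P]
    (X : UAProcess m P) (φ : Language.graph.Sentence) :
    ∃ L : ℝ≥0∞, Tendsto (fun n => P {ω | SatFO (X.G n ω) n φ}) atTop (𝓝 L) := by
  have hm' : 0 < m := Nat.zero_lt_of_lt hm
  set k := quantifierRank φ
  have hφ : (fun x : AttachState m => if SatFO x.graph x.n φ then (1 : ℝ) else 0).FactorsThrough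
      (AttachState.colour k) := fun x y h => by
    simp only [AttachState.satFO_iff_of_colour_eq h]
  obtain ⟨L, hL⟩ := (AttachState.isMarkovCharging_meanStep m).exists_tendsto_pow_apply
    (AttachState.finite_range_colour m k)
    (fun f => AttachState.meanStep_factorsThrough_colour hm')
    (AttachState.colour_comp_advance_factorsThrough hm')
    (fun x => x.exists_colour_iterate_advance_eq k) hφ (AttachState.initial m)
  refine ⟨ENNReal.ofReal L, (tendsto_add_atTop_iff_nat (m + 1)).1 ?_⟩
  refine (ENNReal.tendsto_ofReal hL).congr fun j => ?_
  rw [← X.measureReal_setOf (fun n g => SatFO g n φ), ofReal_measureReal]
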